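/- Let (V_0, X, Y) be a reducing triple for a graph G and let G' = G − X − V_0 (delete the edges in X and the vertices in V_0). If τ(G') ≤ 2·ν(G'), then τ(G) ≤ 2·ν(G). -/

import Mathlib

open SimpleGraph

variable {V : Type*}

/-- A triangle transversal of `G`: a set of edges of `G` meeting every triangle of `G`
(so that its removal leaves a triangle-free graph). -/
def IsTriangleTransversal (G : SimpleGraph V) (X : Finset (Sym2 V)) : Prop :=
  ↑X ⊆ G.edgeSet ∧
    ∀ t : Finset V, G.IsNClique 3 t → ∃ e ∈ X, ∀ v ∈ e, v ∈ t

/-- A triangle packing of `G`: a set of pairwise edge-disjoint triangles of `G`. -/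
def IsTrianglePacking (G : SimpleGraph V) (Y : Finset (Finset V)) : Prop :=
  (∀ t ∈ Y, G.IsNClique 3 t) ∧
    ∀ s ∈ Y, ∀ t ∈ Y, s ≠ t →
      ∀ e ∈ G.edgeSet, ¬ ((∀ v ∈ e, v ∈ s) ∧ (∀ v ∈ e, v ∈ t))

/-- `tau G` is the minimum size of a triangle transversal of `G`. -/
noncomputable def tau (G : SimpleGraph V) : ℕ :=
  sInf {n | ∃ X : Finset (Sym2 V), IsTriangleTransversal G X ∧ X.card = n}

/-- `nu G` is the maximum size of a triangle packing of `G`. -/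
noncomputable def nu (G : SimpleGraph V) : ℕ :=
  sSup {n | ∃ Y : Finset (Finset V), IsTrianglePacking G Y ∧ Y.card = n}

/-- `(V₀, X, Y)` is a reducing triple for `G`: `V₀` is a nonempty set of vertices,
`X` a set of edges of `G`, `Y` a triangle packing of `G`, with (i) `|X| ≤ 2|Y|`;
(ii) every triangle of `G` containing a vertex of `V₀` contains an edge of `X`;
(iii) every edge of a triangle of `Y` with both endpoints outside `V₀` lies in `X`. -/
def IsReducingTriple (G : SimpleGraph V) (V₀ : Finset V) (X : Finset (Sym2 V))
    (Y : Finset (Finset V)) : Prop :=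
  V₀.Nonempty ∧ ↑X ⊆ G.edgeSet ∧ IsTrianglePacking G Y ∧
    X.card ≤ 2 * Y.card ∧
    (∀ t : Finset V, G.IsNClique 3 t → (∃ v ∈ V₀, v ∈ t) → ∃ e ∈ X, ∀ v ∈ e, v ∈ t) ∧
    (∀ t ∈ Y, ∀ u v : V, u ∈ t → v ∈ t → G.Adj u v →
      u ∉ V₀ → v ∉ V₀ → s(u, v) ∈ X)

/-- `G` is irreducible if it admits no reducing triple. -/
def IrreducibleGraph (G : SimpleGraph V) : Prop :=
  ¬ ∃ (V₀ : Finset V) (X : Finset (Sym2 V)) (Y : Finset (Finset V)),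
      IsReducingTriple G V₀ X Y

lemma tau_le_card {G : SimpleGraph V} {X : Finset (Sym2 V)} (hX : IsTriangleTransversal G X) :
    tau G ≤ X.card :=
  Nat.sInf_le ⟨X, hX, rfl⟩

lemma exists_isTriangleTransversal_card_eq_tau [Finite V] (G : SimpleGraph V) :
    ∃ X, IsTriangleTransversal G X ∧ X.card = tau G := by
  classical
  have := Fintype.ofFinite V
  refine Nat.sInf_mem (s := {n | ∃ X, IsTriangleTransversal G X ∧ X.card = n})
    ⟨_, G.edgeFinset, ⟨by simp, fun t ht ↦ ?_⟩, rfl⟩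
  obtain ⟨a, b, c, hab, -, -, rfl⟩ := is3Clique_iff.mp ht
  exact ⟨s(a, b), by simpa using hab, by simp⟩

lemma bddAbove_card_isTrianglePacking [Finite V] (G : SimpleGraph V) :
    BddAbove {n | ∃ Y, IsTrianglePacking G Y ∧ Y.card = n} := by
  classical
  have := Fintype.ofFinite V
  refine ⟨Fintype.card (Finset V), ?_⟩
  rintro _ ⟨Y, -, rfl⟩
  exact Y.card_le_univ

lemma card_le_nu [Finite V] {G : SimpleGraph V} {Y : Finset (Finset V)}
    (hY : IsTrianglePacking G Y) : Y.card ≤ nu G :=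
  le_csSup (bddAbove_card_isTrianglePacking G) ⟨Y, hY, rfl⟩

lemma exists_isTrianglePacking_card_eq_nu [Finite V] (G : SimpleGraph V) :
    ∃ Y, IsTrianglePacking G Y ∧ Y.card = nu G :=
  Nat.sSup_mem (s := {n | ∃ Y, IsTrianglePacking G Y ∧ Y.card = n})
    ⟨0, ∅, by simp [IsTrianglePacking], by simp⟩ (bddAbove_card_isTrianglePacking G)

namespace IsReducingTriple

variable {G : SimpleGraph V} {V₀ : Finset V} {X : Finset (Sym2 V)} {Y : Finset (Finset V)}

/-- Adding `X` to a transversal of the reduced graph gives a transversal of `G`. -/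
lemma isTriangleTransversal_union [DecidableEq V] (hred : IsReducingTriple G V₀ X Y)
    {X' : Finset (Sym2 {v : V | v ∉ V₀})}
    (hX' : IsTriangleTransversal ((G.deleteEdges (X : Set (Sym2 V))).induce {v | v ∉ V₀}) X') :
    IsTriangleTransversal G (X ∪ X'.image (Sym2.map Subtype.val)) := by
  obtain ⟨-, hXG, -, -, hV₀, -⟩ := hred
  obtain ⟨hXG', hcover⟩ := hX'
  refine ⟨?_, fun t ht ↦ ?_⟩
  · intro e he
    rcases Finset.mem_union.mp he with he | he
    · exact hXG he
    · obtain ⟨e', he', rfl⟩ := Finset.mem_image.mp he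
      have hadj := hXG' he'
      induction e' with
      | _ u v => exact (deleteEdges_adj.mp hadj).1
  · by_cases hX : ∃ e ∈ X, ∀ v ∈ e, v ∈ t
    · obtain ⟨e, he, het⟩ := hX
      exact ⟨e, Finset.mem_union_left _ he, het⟩
    have htV₀ : ∀ v ∈ t, v ∉ V₀ := fun v hv hv₀ ↦ hX (hV₀ t ht ⟨v, hv₀, hv⟩)
    have hadj : ∀ u ∈ t, ∀ v ∈ t, u ≠ v → (G.deleteEdges (X : Set (Sym2 V))).Adj u v :=
      fun u hu v hv huv ↦ deleteEdges_adj.mpr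
        ⟨ht.isClique hu hv huv, fun h ↦ hX ⟨s(u, v), h, by simp [hu, hv]⟩⟩
    obtain ⟨a, b, c, hab, hac, hbc, rfl⟩ := is3Clique_iff.mp ht
    obtain ⟨e, he, het⟩ := hcover
      {⟨a, htV₀ a (by simp)⟩, ⟨b, htV₀ b (by simp)⟩, ⟨c, htV₀ c (by simp)⟩}
      (is3Clique_triple_iff.mpr ⟨induce_adj.mpr (hadj a (by simp) b (by simp) hab.ne),
        induce_adj.mpr (hadj a (by simp) c (by simp) hac.ne),
        induce_adj.mpr (hadj b (by simp) c (by simp) hbc.ne)⟩)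
    refine ⟨e.map Subtype.val, Finset.mem_union_right _ (Finset.mem_image_of_mem _ he), ?_⟩
    intro v hv
    obtain ⟨w, hw, rfl⟩ := Sym2.mem_map.mp hv
    simpa [Subtype.ext_iff] using het w hw

/-- A triangle of `Y` and a clique of the reduced graph share at most one vertex. -/
lemma eq_of_mem_of_mem (hred : IsReducingTriple G V₀ X Y) {s : Finset V} (hs : s ∈ Y)
    {t : Finset {v : V | v ∉ V₀}}
    (ht : ((G.deleteEdges (X : Set (Sym2 V))).induce {v | v ∉ V₀}).IsClique t)
    {u v : {v : V | v ∉ V₀}} (hu : u ∈ t) (hv : v ∈ t) (hus : u.1 ∈ s) (hvs : v.1 ∈ s) :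
    u = v := by
  by_contra huv
  obtain ⟨hadj, hX⟩ := deleteEdges_adj.mp (ht hu hv huv)
  exact hX (hred.2.2.2.2.2 s hs u v hus hvs hadj u.2 v.2)

lemma disjoint_map (hred : IsReducingTriple G V₀ X Y)
    {Y' : Finset (Finset {v : V | v ∉ V₀})}
    (hY' : IsTrianglePacking ((G.deleteEdges (X : Set (Sym2 V))).induce {v | v ∉ V₀}) Y') :
    Disjoint Y (Y'.map (Finset.mapEmbedding (.subtype _)).toEmbedding) := by
  refine Finset.disjoint_left.mpr fun s hs hs' ↦ ?_
  obtain ⟨t, ht, rfl⟩ := Finset.mem_map.mp hs'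
  have hclique := hY'.1 t ht
  obtain ⟨u, hu, v, hv, huv⟩ := Finset.one_lt_card.mp (by rw [hclique.card_eq]; norm_num)
  exact huv (hred.eq_of_mem_of_mem hs hclique.isClique hu hv
    (Finset.mem_map_of_mem _ hu) (Finset.mem_map_of_mem _ hv))

/-- Adding `Y` to a packing of the reduced graph gives a packing of `G`. -/
lemma isTrianglePacking_union [DecidableEq V] (hred : IsReducingTriple G V₀ X Y)
    {Y' : Finset (Finset {v : V | v ∉ V₀})}
    (hY' : IsTrianglePacking ((G.deleteEdges (X : Set (Sym2 V))).induce {v | v ∉ V₀}) Y') :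
    IsTrianglePacking G (Y ∪ Y'.map (Finset.mapEmbedding (.subtype _)).toEmbedding) := by
  have hYG := hred.2.2.1
  have hcross : ∀ s ∈ Y, ∀ t ∈ Y', ∀ e ∈ G.edgeSet,
      ¬ ((∀ v ∈ e, v ∈ s) ∧ ∀ v ∈ e, v ∈ t.map (.subtype _)) := by
    rintro s hs t ht ⟨u, v⟩ he ⟨hes, het⟩
    obtain ⟨u, hu, rfl⟩ := Finset.mem_map.mp (het u (Sym2.mem_mk_left _ _))
    obtain ⟨v, hv, rfl⟩ := Finset.mem_map.mp (het v (Sym2.mem_mk_right _ _))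
    obtain rfl := hred.eq_of_mem_of_mem hs (hY'.1 t ht).isClique hu hv
      (hes _ (Sym2.mem_mk_left _ _)) (hes _ (Sym2.mem_mk_right _ _))
    exact G.loopless.irrefl _ he
  refine ⟨fun t ht ↦ ?_, fun s hs t ht hst e he ↦ ?_⟩
  · rcases Finset.mem_union.mp ht with ht | ht
    · exact hYG.1 t ht
    · obtain ⟨t, htY', rfl⟩ := Finset.mem_map.mp ht
      refine ((hY'.1 t htY').map (f := .subtype _)).mono ?_
      rw [SimpleGraph.map_le_iff_le_comap]
      exact fun u v huv ↦ (deleteEdges_adj.mp huv).1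
  · rcases Finset.mem_union.mp hs with hs | hs <;> rcases Finset.mem_union.mp ht with ht | ht
    · exact hYG.2 s hs t ht hst e he
    · obtain ⟨t, htY', rfl⟩ := Finset.mem_map.mp ht
      exact hcross s hs t htY' e he
    · obtain ⟨s, hsY', rfl⟩ := Finset.mem_map.mp hs
      exact fun h ↦ hcross t ht s hsY' e he h.symm
    · obtain ⟨s, hsY', rfl⟩ := Finset.mem_map.mp hs
      obtain ⟨t, htY', rfl⟩ := Finset.mem_map.mp ht
      rintro ⟨hes, het⟩
      obtain ⟨u, v⟩ := e
      obtain ⟨u, hu, rfl⟩ := Finset.mem_map.mp (hes u (Sym2.mem_mk_left _ _))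
      obtain ⟨v, hv, rfl⟩ := Finset.mem_map.mp (hes v (Sym2.mem_mk_right _ _))
      have hut := (Finset.mem_map' _).mp (het _ (Sym2.mem_mk_left _ _))
      have hvt := (Finset.mem_map' _).mp (het _ (Sym2.mem_mk_right _ _))
      have huv : u ≠ v := by
        rintro rfl
        exact G.loopless.irrefl _ he
      refine hY'.2 s hsY' t htY' (fun h ↦ hst (by rw [h])) s(u, v)
        ((hY'.1 s hsY').isClique hu hv huv) ⟨?_, ?_⟩ <;> simp_all

end IsReducingTriple

/-- If `(V₀, X, Y)` is a reducing triple for `G` and `G' = G - X - V₀` satisfies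
`τ(G') ≤ 2·ν(G')`, then `τ(G) ≤ 2·ν(G)`. -/
theorem tuza_of_reducing_triple (V : Type) [Fintype V] [DecidableEq V]
    (G : SimpleGraph V) (V₀ : Finset V) (X : Finset (Sym2 V)) (Y : Finset (Finset V))
    (hred : IsReducingTriple G V₀ X Y)
    (h' : tau ((G.deleteEdges (↑X : Set (Sym2 V))).induce {v : V | v ∉ V₀}) ≤
          2 * nu ((G.deleteEdges (↑X : Set (Sym2 V))).induce {v : V | v ∉ V₀})) :
    tau G ≤ 2 * nu G := by
  obtain ⟨X', hX', hX'card⟩ := exists_isTriangleTransversal_card_eq_tau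
    ((G.deleteEdges (X : Set (Sym2 V))).induce {v : V | v ∉ V₀})
  obtain ⟨Y', hY', hY'card⟩ := exists_isTrianglePacking_card_eq_nu
    ((G.deleteEdges (X : Set (Sym2 V))).induce {v : V | v ∉ V₀})
  have hτ := tau_le_card (hred.isTriangleTransversal_union hX')
  have hν := card_le_nu (hred.isTrianglePacking_union hY')
  rw [Finset.card_union_of_disjoint (hred.disjoint_map hY'), Finset.card_map] at hν
  have hunion := Finset.card_union_le X (X'.image (Sym2.map Subtype.val))
  have himage := Finset.card_image_le (s := X') (f := Sym2.map Subtype.val)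
  have hXY := hred.2.2.2.1
  omega
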